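/- The charge 1 BPS monopole (A, Φ) solves the Bogomolny equation F_A = ∗ d_A Φ on ℝ³∖{0}: for every x ∈ ℝ³∖{0} and all indices i, j ∈ {1,2,3}, one has ∂_i A_j(x) − ∂_j A_i(x) + A_i(x)A_j(x) − A_j(x)A_i(x) = Σ_{k=1}^{3} ε_{ijk} ( ∂_k Φ(x) + A_k(x)Φ(x) − Φ(x)A_k(x) ). -/

import Mathlib

noncomputable section

/-- 2×2 complex matrices, realised as functions `Fin 2 → Fin 2 → ℂ`. -/
abbrev Mat2 := Fin 2 → Fin 2 → ℂ

/-- Matrix multiplication on `Mat2`. -/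
def matMul (A B : Mat2) : Mat2 := fun i j => ∑ k, A i k * B k j

/-- The Pauli matrices τ¹, τ², τ³. -/
def pauli : Fin 3 → Mat2 :=
  ![![![0, 1], ![1, 0]], ![![0, -Complex.I], ![Complex.I, 0]], ![![1, 0], ![0, -1]]]

/-- The totally antisymmetric Levi-Civita symbol with ε₀₁₂ = 1 (indices 0,1,2). -/
def eps (i j k : Fin 3) : ℝ :=
  (((j : ℕ) : ℝ) - ((i : ℕ) : ℝ)) * (((k : ℕ) : ℝ) - ((j : ℕ) : ℝ)) *
    (((k : ℕ) : ℝ) - ((i : ℕ) : ℝ)) / 2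

/-- The Higgs field of the charge 1 BPS monopole of mass `v`:
`Φ(x) = (v coth(2vr) - 1/(2r)) Σₐ x̂ᵃ (i τᵃ)` with `r = ‖x‖`, `x̂ = x/r`. -/
def bpsPhi (v : ℝ) (x : EuclideanSpace ℝ (Fin 3)) : Mat2 :=
  (v * Real.cosh (2 * v * ‖x‖) / Real.sinh (2 * v * ‖x‖) - 1 / (2 * ‖x‖)) •
    ∑ a : Fin 3, (x a / ‖x‖) • (Complex.I • pauli a)

/-- The connection components of the charge 1 BPS monopole of mass `v`:
`A_i(x) = -(1/2)(1 - 2vr/sinh(2vr)) Σ_{j,a} ε_{ija} (x̂ʲ/r) (i τᵃ)`. -/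
def bpsA (v : ℝ) (i : Fin 3) (x : EuclideanSpace ℝ (Fin 3)) : Mat2 :=
  (-(1 / 2) * (1 - 2 * v * ‖x‖ / Real.sinh (2 * v * ‖x‖))) •
    ∑ j : Fin 3, ∑ a : Fin 3, (eps i j a * (x j / ‖x‖ ^ 2)) • (Complex.I • pauli a)

/-- Partial derivative `∂_i f (x)` of a matrix-valued function on ℝ³. -/
def pd (f : EuclideanSpace ℝ (Fin 3) → Mat2) (i : Fin 3)
    (x : EuclideanSpace ℝ (Fin 3)) : Mat2 :=
  fderiv ℝ f x (EuclideanSpace.single i 1)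

/-!
Identify `𝔰𝔲(2)` with `ℝ³` through the basis `i τᵃ`; the commutator becomes `-2` times the cross
product. In this language the BPS monopole is a hedgehog: with `r = ‖x‖`, `Φ = (H(r) / r) x` and
`A_i = ((K(r) - 1) / (2r²)) e_i × x`. Writing `n = e_i × e_j`, vector algebra gives

* `F_ij = -(K' / (2r)) n + (K' / (2r³) + (1 - K²) / (2r⁴)) (x · n) x`,
* `∑ₖ ε_{ijk} D_k Φ = (H K / r) n + (H' / r² - H K / r³) (x · n) x`.

Equating the coefficients of `n` and `x`, the Bogomolny equation follows from the radial system
`K' = -2 H K`, `H' = (1 - K²) / (2r²)`, which is solved by `H = v coth(2vr) - 1/(2r)` and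
`K = 2vr / sinh(2vr)` because `cosh² - sinh² = 1`.
-/

section

open scoped Matrix

section Cross

variable {R : Type*} [CommRing R] (u w x : Fin 3 → R)

lemma cross_cross_cross_self : (u ⨯₃ x) ⨯₃ (w ⨯₃ x) = (x ⬝ᵥ u ⨯₃ w) • x := by
  rw [cross_cross_eq_smul_sub_smul', dotProduct_comm _ x, dot_cross_self, zero_smul, zero_sub,
    ← neg_smul, ← dotProduct_neg, cross_anticomm, triple_product_permutation]

lemma smul_cross_sub_smul_cross : (x ⬝ᵥ u) • w ⨯₃ x - (x ⬝ᵥ w) • u ⨯₃ x =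
    (x ⬝ᵥ u ⨯₃ w) • x - (x ⬝ᵥ x) • u ⨯₃ w := by
  calc
    _ = (x ⨯₃ (w ⨯₃ u)) ⨯₃ x := by
      simp [cross_cross_eq_smul_sub_smul', dotProduct_comm w]
    _ = (x ⬝ᵥ x) • w ⨯₃ u - (w ⨯₃ u ⬝ᵥ x) • x := cross_cross_eq_smul_sub_smul _ _ _
    _ = _ := by
      rw [← cross_anticomm u w, neg_dotProduct, dotProduct_comm (u ⨯₃ w)]
      module

end Cross

lemma norm_sq_eq_dotProduct {ι : Type*} [Fintype ι] (x : EuclideanSpace ℝ ι) :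
    ‖x‖ ^ 2 = x.ofLp ⬝ᵥ x.ofLp := by
  rw [EuclideanSpace.real_norm_sq_eq]
  simp [dotProduct, sq]

section Radial

variable {E G : Type*} [NormedAddCommGroup E] [InnerProductSpace ℝ E]
  [NormedAddCommGroup G] [NormedSpace ℝ G]

lemma hasFDerivAt_norm_of_ne_zero {x : E} (hx : x ≠ 0) :
    HasFDerivAt (‖·‖) (‖x‖⁻¹ • innerSL ℝ x) x := by
  have h := (hasStrictFDerivAt_norm_sq x).hasFDerivAt.sqrt (by positivity)
  simp only [Real.sqrt_sq (norm_nonneg _)] at h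
  convert h using 1
  rw [← Nat.cast_smul_eq_nsmul ℝ, smul_smul]
  congr 1
  field_simp
  norm_num

lemma hasFDerivAt_comp_norm_smul {g : ℝ → ℝ} {g' : ℝ} (L : E →L[ℝ] G) {x : E} (hx : x ≠ 0)
    (hg : HasDerivAt g g' ‖x‖) :
    HasFDerivAt (fun y => g ‖y‖ • L y)
      (g ‖x‖ • L + ((g' / ‖x‖) • innerSL ℝ x).smulRight (L x)) x := by
  have h := (hg.comp_hasFDerivAt x (hasFDerivAt_norm_of_ne_zero hx)).smul L.hasFDerivAt
  rwa [smul_smul, ← div_eq_mul_inv] at h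

end Radial

/-- The curvature component `F_ij = ∂_i A_j - ∂_j A_i + [A_i, A_j]` of the connection `A`. -/
def curvature (A : Fin 3 → EuclideanSpace ℝ (Fin 3) → Mat2) (i j : Fin 3)
    (x : EuclideanSpace ℝ (Fin 3)) : Mat2 :=
  pd (A j) i x - pd (A i) j x + matMul (A i x) (A j x) - matMul (A j x) (A i x)

/-- The covariant derivative `D_k Φ = ∂_k Φ + [A_k, Φ]` of an adjoint-valued field `Φ` with
respect to the connection `A`. -/
def covariantDeriv (A : Fin 3 → EuclideanSpace ℝ (Fin 3) → Mat2)
    (Φ : EuclideanSpace ℝ (Fin 3) → Mat2) (k : Fin 3) (x : EuclideanSpace ℝ (Fin 3)) : Mat2 :=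
  pd Φ k x + matMul (A k x) (Φ x) - matMul (Φ x) (A k x)

/-- The identification `u ↦ ∑ₐ uₐ (i τᵃ)` of `ℝ³` with the Lie algebra `𝔰𝔲(2)`. -/
def su2OfVec : (Fin 3 → ℝ) →ₗ[ℝ] Mat2 :=
  Fintype.linearCombination ℝ fun a => Complex.I • pauli a

local notation "𝐞" i:max => (Pi.single i (1 : ℝ) : Fin 3 → ℝ)

/-- The hedgehog Higgs field `Φ = H(r) ∑ₐ x̂ᵃ (i τᵃ)` with radial profile `H`. -/
def hedgehogHiggs (H : ℝ → ℝ) (x : EuclideanSpace ℝ (Fin 3)) : Mat2 :=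
  (H ‖x‖ / ‖x‖) • su2OfVec x

/-- The hedgehog connection `A_i = -(1 - K(r)) / (2r) ∑_{j,a} ε_{ija} x̂ʲ (i τᵃ)` with radial
profile `K`; the double sum is the image in `𝔰𝔲(2)` of the cross product `e_i × x̂`. -/
def hedgehogConnection (K : ℝ → ℝ) (i : Fin 3) (x : EuclideanSpace ℝ (Fin 3)) : Mat2 :=
  ((K ‖x‖ - 1) / (2 * ‖x‖ ^ 2)) • su2OfVec (𝐞 i ⨯₃ x)

lemma matMul_su2OfVec_sub_matMul (u w : Fin 3 → ℝ) :
    matMul (su2OfVec u) (su2OfVec w) - matMul (su2OfVec w) (su2OfVec u) =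
      su2OfVec (-(2 : ℝ) • u ⨯₃ w) := by
  ext s t
  fin_cases s <;> fin_cases t <;> apply Complex.ext <;>
    simp [matMul, su2OfVec, Fintype.linearCombination_apply, Fin.sum_univ_three, pauli,
      cross_apply] <;>
    ring

lemma single_cross_apply (i k : Fin 3) (x : Fin 3 → ℝ) : (𝐞 i ⨯₃ x) k = ∑ j, eps i j k * x j := by
  fin_cases i <;> fin_cases k <;>
    norm_num +decide [eps, cross_apply, Fin.sum_univ_three, Pi.single_apply]

lemma eps_eq_single_cross_single_apply (i j k : Fin 3) : eps i j k = (𝐞 i ⨯₃ 𝐞 j) k := by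
  simp [single_cross_apply, Pi.single_apply]

lemma sum_eps_smul_single_add (i j : Fin 3) (α β : ℝ) (x : Fin 3 → ℝ) :
    ∑ k, eps i j k • (α • 𝐞 k + (β * x k) • x) =
      α • 𝐞 i ⨯₃ 𝐞 j + (β * (x ⬝ᵥ 𝐞 i ⨯₃ 𝐞 j)) • x := by
  have sum_single (y : Fin 3 → ℝ) : ∑ k, y k • 𝐞 k = y := by
    simpa using (Pi.basisFun ℝ (Fin 3)).sum_repr y
  simp only [eps_eq_single_cross_single_apply, smul_add, Finset.sum_add_distrib]
  congr 1
  · simp only [smul_comm _ α, ← Finset.smul_sum, sum_single]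
  · simp only [smul_smul, ← Finset.sum_smul, dotProduct, Finset.mul_sum]
    congr! 2
    ring

lemma pd_comp_norm_smul {g : ℝ → ℝ} {g' : ℝ} (L : (Fin 3 → ℝ) →ₗ[ℝ] Mat2)
    {x : EuclideanSpace ℝ (Fin 3)} (hx : x ≠ 0) (hg : HasDerivAt g g' ‖x‖) (k : Fin 3) :
    pd (fun y => g ‖y‖ • L y) k x =
      g ‖x‖ • L (𝐞 k) + (g' / ‖x‖ * x k) • L x := by
  let M := L.toContinuousLinearMap ∘L
    (PiLp.continuousLinearEquiv 2 ℝ fun _ : Fin 3 => ℝ).toContinuousLinearMap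
  have h : HasFDerivAt (fun y : EuclideanSpace ℝ (Fin 3) => g ‖y‖ • L y) _ x :=
    hasFDerivAt_comp_norm_smul M hx hg
  have hM (y : EuclideanSpace ℝ (Fin 3)) : M y = L y := rfl
  rw [pd, h.fderiv]
  simp [hM, EuclideanSpace.inner_single_right]

section Ansatz

variable {H K : ℝ → ℝ} {H' K' : ℝ} {x : EuclideanSpace ℝ (Fin 3)}

lemma pd_hedgehogHiggs (hx : x ≠ 0) (hH : HasDerivAt H H' ‖x‖) (k : Fin 3) :
    pd (hedgehogHiggs H) k x = su2OfVec ((H ‖x‖ / ‖x‖) • 𝐞 k +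
      ((H' / ‖x‖ ^ 2 - H ‖x‖ / ‖x‖ ^ 3) * x k) • x.ofLp) := by
  have hr : ‖x‖ ≠ 0 := norm_ne_zero_iff.mpr hx
  refine (pd_comp_norm_smul su2OfVec hx (hH.div (hasDerivAt_id _) hr) k).trans ?_
  simp only [map_add, map_smul, id]
  congr 3
  field_simp

lemma pd_hedgehogConnection (hx : x ≠ 0) (hK : HasDerivAt K K' ‖x‖) (i j : Fin 3) :
    pd (hedgehogConnection K j) i x =
      su2OfVec (((K ‖x‖ - 1) / (2 * ‖x‖ ^ 2)) • 𝐞 j ⨯₃ 𝐞 i +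
        ((K' / (2 * ‖x‖ ^ 3) - (K ‖x‖ - 1) / ‖x‖ ^ 4) * x i) • 𝐞 j ⨯₃ x) := by
  have hr : ‖x‖ ≠ 0 := norm_ne_zero_iff.mpr hx
  have hq := (hK.sub_const 1).div ((hasDerivAt_pow 2 ‖x‖).const_mul 2)
    (mul_ne_zero two_ne_zero (pow_ne_zero 2 hr))
  refine (pd_comp_norm_smul (su2OfVec ∘ₗ crossProduct (𝐞 j)) hx hq i).trans ?_
  simp only [map_add, map_smul, LinearMap.comp_apply]
  congr 3
  field_simp
  ring

lemma covariantDeriv_hedgehog (hx : x ≠ 0) (hH : HasDerivAt H H' ‖x‖) (k : Fin 3) :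
    covariantDeriv (hedgehogConnection K) (hedgehogHiggs H) k x =
      su2OfVec ((H ‖x‖ * K ‖x‖ / ‖x‖) • 𝐞 k +
        ((H' / ‖x‖ ^ 2 - H ‖x‖ * K ‖x‖ / ‖x‖ ^ 3) * x k) • x.ofLp) := by
  have hr : ‖x‖ ≠ 0 := norm_ne_zero_iff.mpr hx
  have single_cross_cross : (𝐞 k ⨯₃ x.ofLp) ⨯₃ x.ofLp = x k • x.ofLp - ‖x‖ ^ 2 • 𝐞 k := by
    simp [cross_cross_eq_smul_sub_smul, norm_sq_eq_dotProduct]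
  rw [covariantDeriv, add_sub_assoc, pd_hedgehogHiggs hx hH, hedgehogHiggs, hedgehogConnection,
    ← map_smul su2OfVec, ← map_smul su2OfVec, matMul_su2OfVec_sub_matMul, ← map_add]
  simp only [map_smul, LinearMap.smul_apply, single_cross_cross]
  congr 1
  match_scalars <;> field_simp <;> ring

lemma curvature_hedgehogConnection (hx : x ≠ 0) (hK : HasDerivAt K K' ‖x‖) (i j : Fin 3) :
    curvature (hedgehogConnection K) i j x =
      su2OfVec (-(K' / (2 * ‖x‖)) • 𝐞 i ⨯₃ 𝐞 j +
        ((K' / (2 * ‖x‖ ^ 3) + (1 - K ‖x‖ ^ 2) / (2 * ‖x‖ ^ 4)) *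
          (x.ofLp ⬝ᵥ 𝐞 i ⨯₃ 𝐞 j)) • x.ofLp) := by
  have hr : ‖x‖ ≠ 0 := norm_ne_zero_iff.mpr hx
  set q := (K ‖x‖ - 1) / (2 * ‖x‖ ^ 2) with hq
  set c := K' / (2 * ‖x‖ ^ 3) - (K ‖x‖ - 1) / ‖x‖ ^ 4 with hc
  set n := 𝐞 i ⨯₃ 𝐞 j with hn
  have commutator_term : (𝐞 i ⨯₃ x.ofLp) ⨯₃ (𝐞 j ⨯₃ x.ofLp) = (x.ofLp ⬝ᵥ n) • x.ofLp :=
    cross_cross_cross_self _ _ _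
  have gradient_term : x i • 𝐞 j ⨯₃ x.ofLp - x j • 𝐞 i ⨯₃ x.ofLp =
      (x.ofLp ⬝ᵥ n) • x.ofLp - ‖x‖ ^ 2 • n := by
    simpa [norm_sq_eq_dotProduct] using smul_cross_sub_smul_cross (𝐞 i) (𝐞 j) x.ofLp
  have normal_coeff : -2 * q - c * ‖x‖ ^ 2 = -(K' / (2 * ‖x‖)) := by
    rw [hq, hc]
    field_simp
    ring
  have radial_coeff :
      c - 2 * q ^ 2 = K' / (2 * ‖x‖ ^ 3) + (1 - K ‖x‖ ^ 2) / (2 * ‖x‖ ^ 4) := by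
    rw [hq, hc]
    field_simp
    ring
  rw [curvature, add_sub_assoc, pd_hedgehogConnection hx hK, pd_hedgehogConnection hx hK,
    hedgehogConnection, hedgehogConnection, ← map_smul su2OfVec, ← map_smul su2OfVec,
    matMul_su2OfVec_sub_matMul, ← map_sub, ← map_add, ← cross_anticomm (𝐞 i) (𝐞 j)]
  simp only [← hq, ← hc, ← hn, map_smul, LinearMap.smul_apply, commutator_term]
  congr 1
  linear_combination (norm := module) c • gradient_term + normal_coeff • n +
    radial_coeff • ((x.ofLp ⬝ᵥ n) • x.ofLp)

theorem curvature_hedgehog_eq_sum_eps_smul_covariantDeriv (hx : x ≠ 0)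
    (hH : HasDerivAt H ((1 - K ‖x‖ ^ 2) / (2 * ‖x‖ ^ 2)) ‖x‖)
    (hK : HasDerivAt K (-2 * H ‖x‖ * K ‖x‖) ‖x‖) (i j : Fin 3) :
    curvature (hedgehogConnection K) i j x =
      ∑ k, eps i j k • covariantDeriv (hedgehogConnection K) (hedgehogHiggs H) k x := by
  have hr : ‖x‖ ≠ 0 := norm_ne_zero_iff.mpr hx
  simp only [curvature_hedgehogConnection hx hK, covariantDeriv_hedgehog hx hH, ← map_smul,
    ← map_sum, sum_eps_smul_single_add]
  congr 4
  · field_simp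
  · field_simp
    ring

end Ansatz

/-- The radial profile `H(r) = v coth(2vr) - 1/(2r)` of the Higgs field of the BPS monopole. -/
def bpsHiggsProfile (v r : ℝ) : ℝ :=
  v * Real.cosh (2 * v * r) / Real.sinh (2 * v * r) - 1 / (2 * r)

/-- The radial profile `K(r) = 2vr / sinh(2vr)` of the connection of the BPS monopole. -/
def bpsConnectionProfile (v r : ℝ) : ℝ :=
  2 * v * r / Real.sinh (2 * v * r)

lemma bpsPhi_eq_hedgehogHiggs (v : ℝ) : bpsPhi v = hedgehogHiggs (bpsHiggsProfile v) := by
  ext1 x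
  simp only [bpsPhi, hedgehogHiggs, bpsHiggsProfile, su2OfVec, Fintype.linearCombination_apply,
    Finset.smul_sum, smul_smul]
  congr! 2
  ring

lemma bpsA_eq_hedgehogConnection (v : ℝ) :
    bpsA v = hedgehogConnection (bpsConnectionProfile v) := by
  ext1 i
  ext1 x
  rw [bpsA, Finset.sum_comm]
  simp only [hedgehogConnection, bpsConnectionProfile, su2OfVec,
    Fintype.linearCombination_apply, single_cross_apply, Finset.smul_sum, Finset.sum_smul,
    smul_smul]
  refine Finset.sum_congr rfl fun a _ => Finset.sum_congr rfl fun j _ => ?_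
  congr 1
  ring

section Profile

variable {v r : ℝ}

lemma sinh_two_mul_mul_ne_zero (hv : v ≠ 0) (hr : r ≠ 0) : Real.sinh (2 * v * r) ≠ 0 :=
  Real.sinh_ne_zero.mpr (by positivity)

lemma hasDerivAt_bpsHiggsProfile (hv : v ≠ 0) (hr : r ≠ 0) :
    HasDerivAt (bpsHiggsProfile v) ((1 - bpsConnectionProfile v r ^ 2) / (2 * r ^ 2)) r := by
  have hs := sinh_two_mul_mul_ne_zero hv hr
  have hl := (hasDerivAt_id r).const_mul (2 * v)
  have h := ((hl.cosh.const_mul v).div hl.sinh hs).sub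
    ((hasDerivAt_const r (1 : ℝ)).div ((hasDerivAt_id r).const_mul 2) (by positivity))
  refine h.congr_deriv ?_
  simp only [bpsConnectionProfile, id]
  field_simp
  rw [Real.cosh_sq]
  ring

lemma hasDerivAt_bpsConnectionProfile (hv : v ≠ 0) (hr : r ≠ 0) :
    HasDerivAt (bpsConnectionProfile v)
      (-2 * bpsHiggsProfile v r * bpsConnectionProfile v r) r := by
  have hs := sinh_two_mul_mul_ne_zero hv hr
  have hl := (hasDerivAt_id r).const_mul (2 * v)
  refine (hl.div hl.sinh hs).congr_deriv ?_
  simp only [bpsHiggsProfile, bpsConnectionProfile, id]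
  field_simp
  ring

end Profile

end

/-- The charge 1 BPS monopole solves the Bogomolny equation `F_A = ∗ d_A Φ` on ℝ³∖{0}:
for all `i, j`, `∂_i A_j - ∂_j A_i + [A_i, A_j] = Σ_k ε_{ijk} (∂_k Φ + [A_k, Φ])`. -/
theorem bps_monopole_solves_bogomolny (v : ℝ) (hv : 0 < v)
    (x : EuclideanSpace ℝ (Fin 3)) (hx : x ≠ 0) (i j : Fin 3) :
    pd (bpsA v j) i x - pd (bpsA v i) j x
      + matMul (bpsA v i x) (bpsA v j x) - matMul (bpsA v j x) (bpsA v i x)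
      = ∑ k : Fin 3, eps i j k •
          (pd (bpsPhi v) k x + matMul (bpsA v k x) (bpsPhi v x)
            - matMul (bpsPhi v x) (bpsA v k x)) := by
  have hr : ‖x‖ ≠ 0 := norm_ne_zero_iff.mpr hx
  change curvature (bpsA v) i j x = ∑ k, eps i j k • covariantDeriv (bpsA v) (bpsPhi v) k x
  rw [bpsA_eq_hedgehogConnection, bpsPhi_eq_hedgehogHiggs]
  exact curvature_hedgehog_eq_sum_eps_smul_covariantDeriv hx
    (hasDerivAt_bpsHiggsProfile hv.ne' hr) (hasDerivAt_bpsConnectionProfile hv.ne' hr) i j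

end
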